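/- Let $d\ge 1$, let $M$ be a $d\times d$ complex matrix, and let $\lambda_1,\ldots,\lambda_d$ be the eigenvalues of $M$ listed with algebraic multiplicity (the roots of the characteristic polynomial of $M$). Let $1\le k\le d$ and let $P\in\mathbb{C}[x_1,\ldots,x_k]$. Then $\sum_{\substack{(n_1,\ldots,n_k)\in\{1,\ldots,d\}^k\\ n_l\neq n_{l'} \text{ for } l\neq l'}} P(\lambda_{n_1},\ldots,\lambda_{n_k}) \;=\; \sum_{\sigma\in S_k} \varepsilon(\sigma)\,\mathrm{Tr}\big(P^{\otimes}(M,\ldots,M)\circ \Pi_{\sigma}\big)$, where $S_k$ is the symmetric group on $\{1,\ldots,k\}$, $\varepsilon(\sigma)$ is the signature of $\sigma$, and $\Pi_\sigma$ is the endomorphism of $(\mathbb{C}^d)^{\otimes k}$ determined by $\Pi_\sigma(v_1\otimes\cdots\otimes v_k) = v_{\sigma^{-1}(1)}\otimes\cdots\otimes v_{\sigma^{-1}(k)}$. -/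

import Mathlib

open Polynomial

/-- `P^⊗(M₁,…,M_k)` for square matrices: the Kronecker-product evaluation,
indexed by multi-indices. -/
noncomputable def tensorEvalM {k : ℕ} {n : Fin k → ℕ} (P : MvPolynomial (Fin k) ℂ)
    (M : ∀ l, Matrix (Fin (n l)) (Fin (n l)) ℂ) :
    Matrix (∀ l, Fin (n l)) (∀ l, Fin (n l)) ℂ :=
  ∑ α ∈ P.support, P.coeff α • Matrix.of fun i j => ∏ l, (M l ^ α l) (i l) (j l)

/-- The matrix of the permutation operator `Π_σ` on `(ℂ^d)^{⊗ k}`,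
`Π_σ (v₁ ⊗ ⋯ ⊗ v_k) = v_{σ⁻¹(1)} ⊗ ⋯ ⊗ v_{σ⁻¹(k)}`. -/
def permOp (d k : ℕ) (σ : Equiv.Perm (Fin k)) :
    Matrix (Fin k → Fin d) (Fin k → Fin d) ℂ :=
  Matrix.of fun i j => if j = i ∘ σ then 1 else 0

/-!
Put `Φ(A₁, …, A_k) = ∑ σ, ε(σ) Tr ((A₁ ⊗ ⋯ ⊗ A_k) Π_σ)`. If `σ` fixes the position of `B` in
`B ⊗ A₁ ⊗ ⋯ ⊗ A_k`, a factor `Tr B` splits off; if `σ` sends the position of `A_l` to it, the two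
factors merge into `B A_l` and the sign changes. Hence
`Φ(B, A₁, …, A_k) = Tr B · Φ(A₁, …, A_k) - ∑ l, Φ(A₁, …, B A_l, …, A_k)`,
and `Φ(M ^ α₁, …, M ^ α_k)` depends on `M` only through the traces of its powers. These depend
only on the characteristic polynomial, because `det p(M)` does for every monic `p` (split `p` into
linear factors), in particular for `p = Y ^ k - X` over `R[X]`. We may therefore replace `M` by
the diagonal matrix of its eigenvalues, for which `Φ` is the sum over all tuples `t` of
`det (δ_{t_i t_l} λ_{t_l} ^ α_l)`: a tuple with a repetition gives two equal rows, an injective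
one a diagonal matrix.
-/

section CharpolyPow

variable {R n : Type*} [CommRing R] [Fintype n] [DecidableEq n] {A B : Matrix n n R}

theorem det_aeval_X_add_C (M : Matrix n n R) (a : R) :
    (aeval M (X + C a)).det = (-1) ^ Fintype.card n * M.charpoly.eval (-a) := by
  rw [Matrix.eval_charpoly, ← Matrix.det_neg, neg_sub, map_neg, sub_neg_eq_add, map_add, aeval_X,
    aeval_C, Matrix.algebraMap_eq_diagonal]
  rfl

theorem algebraMap_det_aeval {S : Type*} [CommRing S] [Algebra R S] (M : Matrix n n R) (p : R[X]) :
    algebraMap R S (aeval M p).det =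
      (aeval (M.map (algebraMap R S)) (p.map (algebraMap R S))).det := by
  rw [RingHom.map_det, aeval_map_algebraMap]
  exact congrArg Matrix.det (aeval_algHom_apply ((Algebra.ofId R S).mapMatrix (m := n)) M p).symm

theorem det_aeval_eq_of_charpoly_eq_of_splits (h : A.charpoly = B.charpoly) {p : R[X]}
    (hp : p.Splits) : (aeval A p).det = (aeval B p).det := by
  induction hp using Submonoid.closure_induction with
  | mem q hq =>
    rcases hq with ⟨a, rfl⟩ | ⟨a, rfl⟩
    · simp only [aeval_C]
    · rw [det_aeval_X_add_C, det_aeval_X_add_C, h]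
  | one => simp only [map_one]
  | mul q r _ _ hq hr => simp only [map_mul, Matrix.det_mul, hq, hr]

theorem det_aeval_eq_of_charpoly_eq_of_monic (h : A.charpoly = B.charpoly) {p : R[X]}
    (hp : p.Monic) : (aeval A p).det = (aeval B p).det := by
  nontriviality R
  obtain ⟨S, _, _, _, _, _, hS⟩ := hp.exists_splits_map
  apply FaithfulSMul.algebraMap_injective R S
  rw [algebraMap_det_aeval, algebraMap_det_aeval]
  refine det_aeval_eq_of_charpoly_eq_of_splits ?_ hS
  rw [Matrix.charpoly_map, Matrix.charpoly_map, h]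

theorem charpoly_pow_eq_det_aeval (M : Matrix n n R) (k : ℕ) :
    (M ^ k).charpoly =
      (-1) ^ Fintype.card n * (aeval (M.map C) (X ^ k - C X : R[X][X])).det := by
  rw [← Matrix.det_neg, Matrix.charpoly, Matrix.charmatrix, map_pow, map_sub, neg_sub, map_pow,
    aeval_X, aeval_C, Matrix.algebraMap_eq_diagonal]
  rfl

theorem charpoly_pow_eq_of_charpoly_eq (h : A.charpoly = B.charpoly) (k : ℕ) :
    (A ^ k).charpoly = (B ^ k).charpoly := by
  obtain rfl | hk := eq_or_ne k 0
  · rw [pow_zero, pow_zero]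
  have hC : (A.map C).charpoly = (B.map C).charpoly := by
    rw [Matrix.charpoly_map, Matrix.charpoly_map, h]
  rw [charpoly_pow_eq_det_aeval, charpoly_pow_eq_det_aeval,
    det_aeval_eq_of_charpoly_eq_of_monic hC (monic_X_pow_sub_C X hk)]

theorem trace_pow_eq_of_charpoly_eq (h : A.charpoly = B.charpoly) (k : ℕ) :
    (A ^ k).trace = (B ^ k).trace := by
  rw [Matrix.trace_eq_neg_charpoly_nextCoeff, Matrix.trace_eq_neg_charpoly_nextCoeff,
    charpoly_pow_eq_of_charpoly_eq h]

end CharpolyPow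

open Equiv

/-- The tensor product `⨂ l, A l` of a finite family of square matrices, as a matrix indexed by
tuples of indices. -/
def piKronecker {R ι n : Type*} [CommMonoid R] [Fintype ι] (A : ι → Matrix n n R) :
    Matrix (ι → n) (ι → n) R :=
  Matrix.of fun i j => ∏ l, A l (i l) (j l)

/-- The matrix of the operator `Π_σ` permuting the factors of the tensor power `(R ^ n) ^ {⊗ ι}`;
it is `permOp` over arbitrary coefficients and index types. -/
def tensorPerm (R n : Type*) {ι : Type*} [Zero R] [One R] [Fintype ι] [DecidableEq n]
    (σ : Perm ι) : Matrix (ι → n) (ι → n) R :=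
  Matrix.of fun i j => if j = i ∘ σ then 1 else 0

/-- The evaluation `P^⊗(M, …, M)`; it is `tensorEvalM` for equal arguments, over arbitrary
coefficients and index types. -/
noncomputable def tensorEval {R ι n : Type*} [CommSemiring R] [Fintype ι] [Fintype n]
    [DecidableEq n] (P : MvPolynomial ι R) (M : Matrix n n R) : Matrix (ι → n) (ι → n) R :=
  ∑ α ∈ P.support, P.coeff α • piKronecker fun l => M ^ α l

/-- The signed trace `∑ σ, ε(σ) Tr ((⨂ l, A l) Π_σ)`, that is, the unnormalized trace of
`⨂ l, A l` against the antisymmetrizer. -/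
def alternatingTrace {R ι n : Type*} [CommRing R] [Fintype ι] [DecidableEq ι] [Fintype n]
    [DecidableEq n] (A : ι → Matrix n n R) : R :=
  ∑ σ : Perm ι, ((Perm.sign σ : ℤ) : R) * (piKronecker A * tensorPerm R n σ).trace

theorem prod_cons_decomposeFin_succ {R n : Type*} [CommMonoid R] {k : ℕ} (B : Matrix n n R)
    (A : Fin k → Matrix n n R) (τ : Perm (Fin k)) (l : Fin k) (i : n) (j : Fin k → n) :
    ∏ m, (Fin.cons B A : Fin (k + 1) → Matrix n n R) m
        ((Fin.cons i j : Fin (k + 1) → n) (Perm.decomposeFin.symm ((τ l).succ, τ) m))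
        ((Fin.cons i j : Fin (k + 1) → n) m) =
      B (j (τ l)) i * A l i (j l) * ∏ m ∈ {l}ᶜ, A m (j (τ m)) (j m) := by
  have cons_swap : ∀ m ∈ ({l}ᶜ : Finset (Fin k)),
      (Fin.cons i j : Fin (k + 1) → n) (swap 0 (τ l).succ (τ m).succ) = j (τ m) := by
    intro m hm
    rw [swap_apply_of_ne_of_ne (Fin.succ_ne_zero _) (by simpa using hm), Fin.cons_succ]
  rw [Fin.prod_univ_succ, Fintype.prod_eq_mul_prod_compl l]
  simp [Finset.prod_congr rfl fun m hm => congrArg (A m · (j m)) (cons_swap m hm), mul_assoc]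

section TraceTensorPerm

variable {R n : Type*} [CommSemiring R] [Fintype n] [DecidableEq n]

theorem trace_piKronecker_mul_tensorPerm {ι : Type*} [Fintype ι] [DecidableEq ι]
    (A : ι → Matrix n n R) (σ : Perm ι) :
    (piKronecker A * tensorPerm R n σ).trace = ∑ j : ι → n, ∏ l, A l (j (σ l)) (j l) := by
  rw [Matrix.trace_mul_comm]
  simp [Matrix.trace, Matrix.mul_apply, tensorPerm, piKronecker]

variable {k : ℕ}

theorem trace_piKronecker_cons_mul_tensorPerm_decomposeFin_zero (B : Matrix n n R)
    (A : Fin k → Matrix n n R) (τ : Perm (Fin k)) :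
    (piKronecker (Fin.cons B A : Fin (k + 1) → Matrix n n R) *
        tensorPerm R n (Perm.decomposeFin.symm (0, τ))).trace =
      B.trace * (piKronecker A * tensorPerm R n τ).trace := by
  simp only [trace_piKronecker_mul_tensorPerm]
  rw [← (Fin.consEquiv fun _ => n).sum_comp, Fintype.sum_prod_type, Matrix.trace,
    Finset.sum_mul_sum]
  simp [Fin.prod_univ_succ, Fin.consEquiv]

theorem trace_piKronecker_cons_mul_tensorPerm_decomposeFin_succ (B : Matrix n n R)
    (A : Fin k → Matrix n n R) (τ : Perm (Fin k)) (l : Fin k) :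
    (piKronecker (Fin.cons B A : Fin (k + 1) → Matrix n n R) *
        tensorPerm R n (Perm.decomposeFin.symm ((τ l).succ, τ))).trace =
      (piKronecker (Function.update A l (B * A l)) * tensorPerm R n τ).trace := by
  simp only [trace_piKronecker_mul_tensorPerm]
  rw [← (Fin.consEquiv fun _ => n).sum_comp, Fintype.sum_prod_type, Finset.sum_comm]
  refine Finset.sum_congr rfl fun j _ => ?_
  calc ∑ i, ∏ m, (Fin.cons B A : Fin (k + 1) → Matrix n n R) m
          ((Fin.cons i j : Fin (k + 1) → n) (Perm.decomposeFin.symm ((τ l).succ, τ) m))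
          ((Fin.cons i j : Fin (k + 1) → n) m)
    _ = (B * A l) (j (τ l)) (j l) * ∏ m ∈ {l}ᶜ, A m (j (τ m)) (j m) := by
      simp only [prod_cons_decomposeFin_succ, Matrix.mul_apply, Finset.sum_mul]
    _ = ∏ m, Function.update A l (B * A l) m (j (τ m)) (j m) := by
      rw [Fintype.prod_eq_mul_prod_compl l, Function.update_self,
        Finset.prod_congr rfl fun m hm => ?_]
      rw [Function.update_of_ne (by simpa using hm)]

end TraceTensorPerm

section AlternatingTrace

variable {R n : Type*} [CommRing R] [Fintype n] [DecidableEq n]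

section

variable {ι : Type*} [Fintype ι] [DecidableEq ι]

theorem alternatingTrace_eq_sum_det (A : ι → Matrix n n R) :
    alternatingTrace A = ∑ j : ι → n, (Matrix.of fun i l => A l (j i) (j l)).det := by
  simp only [alternatingTrace, trace_piKronecker_mul_tensorPerm, Matrix.det_apply', Finset.mul_sum]
  exact Finset.sum_comm

theorem alternatingTrace_diagonal (a : ι → n → R) :
    alternatingTrace (fun l => Matrix.diagonal (a l)) =
      ∑ t : ι → n with Function.Injective t, ∏ l, a l (t l) := by
  rw [alternatingTrace_eq_sum_det, Finset.sum_filter]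
  refine Finset.sum_congr rfl fun t _ => ?_
  split_ifs with ht
  · rw [← Matrix.det_diagonal]
    congr 1
    ext i l
    obtain rfl | hil := eq_or_ne i l <;> simp [*, ht.ne_iff]
  · obtain ⟨i, i', hii', hne⟩ := Function.not_injective_iff.mp ht
    exact Matrix.det_zero_of_row_eq hne (funext fun l => by simp [hii'])

theorem sum_sign_mul_trace_tensorEval_mul_tensorPerm (P : MvPolynomial ι R) (M : Matrix n n R) :
    ∑ σ : Perm ι, ((Perm.sign σ : ℤ) : R) * (tensorEval P M * tensorPerm R n σ).trace =
      ∑ α ∈ P.support, P.coeff α * alternatingTrace fun l => M ^ α l := by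
  simp only [tensorEval, alternatingTrace, Finset.sum_mul, Matrix.trace_sum, Matrix.smul_mul,
    Matrix.trace_smul, smul_eq_mul, Finset.mul_sum, mul_left_comm]
  exact Finset.sum_comm

end

variable {k : ℕ}

theorem alternatingTrace_cons (B : Matrix n n R) (A : Fin k → Matrix n n R) :
    alternatingTrace (Fin.cons B A : Fin (k + 1) → Matrix n n R) =
      B.trace * alternatingTrace A - ∑ l, alternatingTrace (Function.update A l (B * A l)) := by
  have sum_succ : ∑ q : Fin k, ∑ τ : Perm (Fin k), ((Perm.sign τ : ℤ) : R) *
        (piKronecker (Fin.cons B A : Fin (k + 1) → Matrix n n R) *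
          tensorPerm R n (Perm.decomposeFin.symm (q.succ, τ))).trace =
      ∑ l, alternatingTrace (Function.update A l (B * A l)) := by
    simp only [alternatingTrace]
    rw [Finset.sum_comm, Finset.sum_comm (γ := Fin k)]
    refine Finset.sum_congr rfl fun τ _ => ?_
    rw [← Equiv.sum_comp τ]
    simp only [trace_piKronecker_cons_mul_tensorPerm_decomposeFin_succ]
  rw [← sum_succ, alternatingTrace, ← Perm.decomposeFin.symm.sum_comp, Fintype.sum_prod_type,
    Fin.sum_univ_succ]
  simp [alternatingTrace, trace_piKronecker_cons_mul_tensorPerm_decomposeFin_zero, Finset.mul_sum,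
    mul_left_comm, sub_eq_add_neg]

theorem alternatingTrace_pow_cons (M : Matrix n n R) (e : ℕ) (α : Fin k → ℕ) :
    alternatingTrace (fun l => M ^ (Fin.cons e α : Fin (k + 1) → ℕ) l) =
      (M ^ e).trace * alternatingTrace (fun l => M ^ α l) -
        ∑ l, alternatingTrace fun i => M ^ Function.update α l (e + α l) i := by
  have pow_cons : (fun l => M ^ (Fin.cons e α : Fin (k + 1) → ℕ) l) =
      Fin.cons (M ^ e) fun l => M ^ α l := Fin.comp_cons (M ^ ·) e α
  have pow_update (l : Fin k) : (fun i => M ^ Function.update α l (e + α l) i) =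
      Function.update (fun i => M ^ α i) l (M ^ e * M ^ α l) := by
    rw [← pow_add]
    exact Function.comp_update (M ^ ·) α l (e + α l)
  simp only [pow_cons, pow_update, alternatingTrace_cons]

theorem alternatingTrace_pow_eq_of_trace_pow_eq {m : Type*} [Fintype m] [DecidableEq m]
    {M : Matrix m m R} {N : Matrix n n R} (h : ∀ e : ℕ, (M ^ e).trace = (N ^ e).trace)
    (α : Fin k → ℕ) :
    alternatingTrace (fun l => M ^ α l) = alternatingTrace fun l => N ^ α l := by
  induction k with
  | zero => simp [alternatingTrace_eq_sum_det]
  | succ k ih =>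
    cases α using Fin.consCases with
    | _ e α => simp only [alternatingTrace_pow_cons, h, ih]

theorem alternatingTrace_pow_eq_sum_injective (M : Matrix n n R) (lam : n → R)
    (hlam : M.charpoly = ∏ i, (X - C (lam i))) (α : Fin k → ℕ) :
    alternatingTrace (fun l => M ^ α l) =
      ∑ t : Fin k → n with Function.Injective t, ∏ l, lam (t l) ^ α l := by
  have charpoly_eq : M.charpoly = (Matrix.diagonal lam).charpoly :=
    hlam.trans (Matrix.charpoly_diagonal lam).symm
  rw [alternatingTrace_pow_eq_of_trace_pow_eq (trace_pow_eq_of_charpoly_eq charpoly_eq)]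
  simp only [Matrix.diagonal_pow, alternatingTrace_diagonal, Pi.pow_apply]

theorem stmt18_general (M : Matrix n n R) (lam : n → R)
    (hlam : M.charpoly = ∏ i, (X - C (lam i))) (P : MvPolynomial (Fin k) R) :
    ∑ t : Fin k → n with Function.Injective t, MvPolynomial.eval (fun l => lam (t l)) P =
      ∑ σ : Perm (Fin k), ((Perm.sign σ : ℤ) : R) *
        (tensorEval P M * tensorPerm R n σ).trace := by
  simp only [sum_sign_mul_trace_tensorEval_mul_tensorPerm,
    alternatingTrace_pow_eq_sum_injective M lam hlam, MvPolynomial.eval_eq', Finset.mul_sum]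
  exact Finset.sum_comm

end AlternatingTrace

/-- sums of `P` over pairwise-distinct tuples of eigenvalues
are computed by the signed traces against permutation operators. -/
theorem stmt18 (d : ℕ) (hd : 1 ≤ d) (M : Matrix (Fin d) (Fin d) ℂ)
    (lam : Fin d → ℂ) (hlam : M.charpoly = ∏ i, (X - C (lam i)))
    (k : ℕ) (hk : 1 ≤ k) (hkd : k ≤ d) (P : MvPolynomial (Fin k) ℂ) :
    ∑ t ∈ Finset.univ.filter (fun t : Fin k → Fin d => Function.Injective t),
        MvPolynomial.eval (fun l => lam (t l)) P =
      ∑ σ : Equiv.Perm (Fin k), ((Equiv.Perm.sign σ : ℤ) : ℂ) *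
        Matrix.trace
          (tensorEvalM (n := fun _ : Fin k => d) P (fun _ => M) * permOp d k σ) :=
  stmt18_general M lam hlam P
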